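/- arXiv:dg-ga/9608005 — 2 statements merged into one kernel-verified Lean document; each statement's English description precedes it below -/
import Mathlib

section
/- Let T and E be real Banach spaces, S a Hausdorff topological space, s₀ ∈ S, and V ⊆ T an open neighbourhood of 0. Let H : S × V → E be continuous and, for each s ∈ S, Fréchet differentiable in the second variable, with partial differential D_V H : S × V → L(T,E) uniformly continuous at (s₀,0), i.e. for every ε > 0 there are a neighbourhood W of s₀ and δ > 0 such that ‖D_V H(s,v) − D_V H(s₀,0)‖ < ε whenever s ∈ W, v ∈ V and ‖v‖ < δ. Assume topological direct sum decompositions T = K ⊕ P and E = C ⊕ Q into closed subspaces such that σ := D_V H(s₀,0)|_P : P → Q is a toplinear isomorphism, and assume H(s₀,0) ∈ C. Then there exist an open neighbourhood S' ⊆ S of s₀, an open neighbourhood V' ⊆ V of 0, a map Φ : S' × V' → S' × V which, writing v = (k,p) ∈ K ⊕ P, has the form Φ(s,(k,p)) = (s,(k,φ(s,k,p))), is a homeomorphism onto an open subset of S' × V and satisfies Φ(s₀,0) = (s₀,0), and a continuous map κ : S' × V' → C such that H(Φ(s,(k,p))) = κ(s,(k,p)) + σ(p) for all (s,(k,p)) ∈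 S' × V'. -/
open Set Filter Topology

/-!
Only the `P`-direction needs inverting, so `(s, k) ∈ S × K` is treated as a parameter. Let
`J : E → P` be the projection onto `Q` along `C` followed by `σ⁻¹`. The maps
`p ↦ J (H s (k + p))` have derivative `id` at the base point, and the inverse function theorem with
a parameter, whose radii are uniform in the parameter because the derivative is continuous at the
base point, makes `Θ (s, k + p) = (s, k + J (H s (k + p)))` a local homeomorphism of `S × T`.
Take `Φ = Θ⁻¹` on a box. Since `J ∘ H ∘ Φ` is the projection onto `P` and `D_V H(s₀, 0)` is a right
inverse of `J`, the difference `H ∘ Φ - σ ∘ pr₂` takes values in `ker J = C`.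
-/

open scoped NNReal

section ParametricInverseFunctionTheorem

variable {𝕜 X E F : Type*} [RCLike 𝕜] [TopologicalSpace X]
  [NormedAddCommGroup E] [NormedSpace 𝕜 E] [NormedAddCommGroup F] [NormedSpace 𝕜 F]
  {f : X → E → F} {x₀ : X} {y₀ : E}

theorem exists_mem_nhds_eventually_approximatesLinearOn {f' : X → E → E →L[𝕜] F}
    (hf : ∀ᶠ q : X × E in 𝓝 (x₀, y₀), HasFDerivAt (f q.1) (f' q.1 q.2) q.2)
    (hf' : ContinuousAt (fun q : X × E ↦ f' q.1 q.2) (x₀, y₀)) {c : ℝ≥0} (hc : 0 < c) :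
    ∃ u ∈ 𝓝 y₀, ∀ᶠ x in 𝓝 x₀, ApproximatesLinearOn (f x) (f' x₀ y₀) u c := by
  have hclose : ∀ᶠ q : X × E in 𝓝 (x₀, y₀), ‖f' q.1 q.2 - f' x₀ y₀‖ ≤ c := by
    filter_upwards [hf' (Metric.closedBall_mem_nhds _ (NNReal.coe_pos.2 hc))] with q hq
    exact mem_closedBall_iff_norm.1 hq
  have hboth := hf.and hclose
  rw [nhds_prod_eq, eventually_prod_iff] at hboth
  obtain ⟨s, hs, u, hu, hsu⟩ := hboth
  obtain ⟨r, hr, hru⟩ := Metric.eventually_nhds_iff_ball.1 hu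
  refine ⟨Metric.ball y₀ r, Metric.ball_mem_nhds _ hr, ?_⟩
  filter_upwards [hs] with x hx y hy z hz
  let : NormedSpace ℝ E := .restrictScalars ℝ 𝕜 E
  exact (convex_ball y₀ r).norm_image_sub_le_of_norm_hasFDerivWithin_le'
    (fun w hw ↦ (hsu hx (hru w hw)).1.hasFDerivWithinAt) (fun w hw ↦ (hsu hx (hru w hw)).2) hz hy

variable [CompleteSpace E]

theorem nhds_le_map_prodMk_of_approximatesLinearOn {A : E →L[𝕜] F}
    (Ainv : A.NonlinearRightInverse) {c : ℝ≥0} (hc : Subsingleton F ∨ c < Ainv.nnnorm⁻¹)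
    {u : Set E} (hu : u ∈ 𝓝 y₀)
    (hf : ContinuousAt (fun x ↦ f x y₀) x₀)
    (happ : ∀ᶠ x in 𝓝 x₀, ApproximatesLinearOn (f x) A u c) :
    𝓝 (x₀, f x₀ y₀) ≤ map (fun q : X × E ↦ (q.1, f q.1 q.2)) (𝓝 (x₀, y₀)) := by
  intro t ht
  obtain ⟨s, hs, v, hv, hsv⟩ := mem_nhds_prod_iff.1 (mem_map.1 ht)
  rcases hc with hF | hc
  · filter_upwards [continuousAt_fst.eventually hs] with q hq
    rw [← Prod.mk.eta (p := q), Subsingleton.elim q.2 (f q.1 y₀)]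
    exact hsv (mk_mem_prod hq (mem_of_mem_nhds hv))
  obtain ⟨ε, hε, hεuv⟩ := Metric.nhds_basis_closedBall.mem_iff.1 (inter_mem hu hv)
  set η : ℝ := ((Ainv.nnnorm : ℝ)⁻¹ - c) * ε
  have hη : 0 < η := mul_pos (sub_pos.2 (mod_cast hc)) hε
  have hdist : ∀ᶠ q : X × F in 𝓝 (x₀, f x₀ y₀), dist q.2 (f q.1 y₀) < η := by
    have hcont : ContinuousAt (fun q : X × F ↦ dist q.2 (f q.1 y₀)) (x₀, f x₀ y₀) :=
      continuousAt_snd.dist (hf.comp_of_eq continuousAt_fst rfl)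
    exact hcont.eventually_lt_const (by simpa using hη)
  filter_upwards [hdist, continuousAt_fst.eventually happ, continuousAt_fst.eventually hs]
    with q hq hqu hqs
  obtain ⟨y, hy, hyq⟩ := hqu.surjOn_closedBall_of_nonlinearRightInverse Ainv hε.le
    (hεuv.trans inter_subset_left) hq.le
  simpa only [mem_preimage, hyq] using hsv (mk_mem_prod hqs (hεuv hy).2)

theorem exists_openPartialHomeomorph_prodMk_of_approximatesLinearOn [Nonempty X] {A : E ≃L[𝕜] F}
    {c : ℝ≥0} (hc : Subsingleton E ∨ c < ‖(A.symm : F →L[𝕜] E)‖₊⁻¹) {s : Set X} {u : Set E}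
    (hs : IsOpen s) (hu : IsOpen u) (hf : ∀ y ∈ u, ContinuousOn (fun x ↦ f x y) s)
    (happ : ∀ x ∈ s, ApproximatesLinearOn (f x) (A : E →L[𝕜] F) u c) :
    ∃ Θ : OpenPartialHomeomorph (X × E) (X × F),
      Θ.source = s ×ˢ u ∧ ⇑Θ = fun q ↦ (q.1, f q.1 q.2) := by
  set Θ₀ : X × E → X × F := fun q ↦ (q.1, f q.1 q.2)
  have hinj : InjOn Θ₀ (s ×ˢ u) := by
    rintro ⟨x, y⟩ ⟨hx, hy⟩ ⟨x', y'⟩ ⟨-, hy'⟩ heq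
    obtain ⟨rfl, hyy'⟩ := Prod.mk.inj heq
    exact Prod.ext rfl ((happ x hx).injOn hc hy hy' hyy')
  have hcont : ContinuousOn Θ₀ (s ×ˢ u) :=
    continuousOn_fst.prodMk <| continuousOn_prod_of_continuousOn_lipschitzOnWith' _ _
      (fun x hx ↦ lipschitzOnWith_iff_restrict.2 (happ x hx).lipschitz) hf
  have hopen : IsOpenMap ((s ×ˢ u).domRestrict Θ₀) := by
    refine IsOpenMap.of_nhds_le fun ⟨⟨x, y⟩, hx, hy⟩ ↦ ?_
    rw [domRestrict_eq, ← map_map, (hs.prod hu).isOpenEmbedding_subtypeVal.map_nhds_eq]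
    refine nhds_le_map_prodMk_of_approximatesLinearOn A.toNonlinearRightInverse
      (hc.imp_left fun (_ : Subsingleton E) ↦ A.symm.toEquiv.subsingleton) (hu.mem_nhds hy)
      ((hf y hy).continuousAt (hs.mem_nhds hx)) ?_
    filter_upwards [hs.mem_nhds hx] with x' hx' using happ x' hx'
  exact ⟨.ofContinuousOpenRestrict hinj.toPartialEquiv hcont hopen (hs.prod hu), rfl, rfl⟩

theorem exists_openPartialHomeomorph_prodMk {f' : X → E → E →L[𝕜] F} {A : E ≃L[𝕜] F}
    (hf : ∀ᶠ q : X × E in 𝓝 (x₀, y₀), ContinuousAt (fun x ↦ f x q.2) q.1)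
    (hff' : ∀ᶠ q : X × E in 𝓝 (x₀, y₀), HasFDerivAt (f q.1) (f' q.1 q.2) q.2)
    (hf' : ContinuousAt (fun q : X × E ↦ f' q.1 q.2) (x₀, y₀)) (hA : f' x₀ y₀ = A) :
    ∃ Θ : OpenPartialHomeomorph (X × E) (X × F),
      (x₀, y₀) ∈ Θ.source ∧ ⇑Θ = fun q ↦ (q.1, f q.1 q.2) := by
  obtain ⟨c, hc, hcA⟩ : ∃ c : ℝ≥0, 0 < c ∧ (Subsingleton E ∨ c < ‖(A.symm : F →L[𝕜] E)‖₊⁻¹) := by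
    rcases A.subsingleton_or_nnnorm_symm_pos with hE | hA
    · exact ⟨1, one_pos, .inl hE⟩
    · exact (exists_between (inv_pos.2 hA)).imp fun c hc ↦ hc.imp_right .inr
  obtain ⟨u₁, hu₁, happ⟩ := exists_mem_nhds_eventually_approximatesLinearOn hff' hf' hc
  rw [nhds_prod_eq] at hf
  obtain ⟨s₁, hs₁, u₂, hu₂, hcont⟩ := eventually_prod_iff.1 hf
  obtain ⟨s, hs, hso, hxs⟩ := eventually_nhds_iff.1 (hs₁.and happ)
  obtain ⟨u, hu, huo, hyu⟩ := mem_nhds_iff.1 (inter_mem hu₁ hu₂)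
  have : Nonempty X := ⟨x₀⟩
  obtain ⟨Θ, hsource, hΘ⟩ := exists_openPartialHomeomorph_prodMk_of_approximatesLinearOn hcA hso huo
    (fun y hy x hx ↦ (hcont (hs x hx).1 (hu hy).2).continuousWithinAt)
    (fun x hx ↦ (hA ▸ (hs x hx).2).mono_set fun y hy ↦ (hu hy).1)
  exact ⟨Θ, hsource ▸ ⟨hxs, hyu⟩, hΘ⟩

end ParametricInverseFunctionTheorem

section TopologicalComplement

variable {R M : Type*} [Ring R] [TopologicalSpace M] [AddCommGroup M] [Module R M]
  {p q : Submodule R M}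

theorem projectionL_add_of_mem (h : p.IsTopCompl q) {x y : M} (hx : x ∈ p) (hy : y ∈ q) :
    p.projectionL q h (x + y) = x := by
  rw [map_add, (p.projectionL_eq_self_iff h x).2 hx, (p.projectionL_apply_eq_zero_iff h).2 hy,
    add_zero]

theorem eq_projectionL_of_add_eq_self (h : p.IsTopCompl q) {f g : M →L[R] M}
    (hf : ∀ x, f x ∈ p) (hg : ∀ x, g x ∈ q) (hfg : ∀ x, f x + g x = x) :
    f = p.projectionL q h := by
  ext x
  rw [← projectionL_add_of_mem h (hf x) (hg x), hfg]

theorem exists_leftInverse_ker_eq [ContinuousSub M] {N : Type*} [TopologicalSpace N]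
    [AddCommGroup N] [Module R N] (h : p.IsTopCompl q) (σ : N ≃L[R] q) :
    ∃ J : M →L[R] N, (∀ x, J (σ x) = x) ∧ J.ker = p := by
  refine ⟨(σ.symm : q →L[R] N) ∘L q.projectionOntoL p h.symm, fun x ↦ ?_, ?_⟩
  · rw [ContinuousLinearMap.comp_apply, Submodule.projectionOntoL_apply_left]
    exact σ.symm_apply_apply x
  · ext y
    exact σ.symm.map_eq_zero_iff.trans (Submodule.projectionOntoL_apply_eq_zero_iff h.symm)

end TopologicalComplement

theorem exists_openPartialHomeomorph_source_eq_prod {X Y Z : Type*} [TopologicalSpace X]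
    [TopologicalSpace Y] [TopologicalSpace Z] (Θ : OpenPartialHomeomorph Z (X × Y))
    {z : Z} (hz : z ∈ Θ.source) {u : Set Z} (hu : u ∈ 𝓝 z) {w : Set (X × Y)} (hw : w ∈ 𝓝 (Θ z)) :
    ∃ (s : Set X) (t : Set Y) (Φ : OpenPartialHomeomorph (X × Y) Z),
      IsOpen s ∧ IsOpen t ∧ Θ z ∈ s ×ˢ t ∧ s ×ˢ t ⊆ w ∧ Φ.source = s ×ˢ t ∧
      MapsTo Φ (s ×ˢ t) u ∧ LeftInvOn Θ Φ (s ×ˢ t) ∧ Φ (Θ z) = z := by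
  have hsymm : Θ.symm ⁻¹' u ∈ 𝓝 (Θ z) :=
    (Θ.continuousAt_symm (Θ.map_source hz)).preimage_mem_nhds ((Θ.left_inv hz).symm ▸ hu)
  have htarget : Θ.target ∈ 𝓝 (Θ z) := Θ.open_target.mem_nhds (Θ.map_source hz)
  obtain ⟨s, t, hs, hzs, ht, hzt, hst⟩ :=
    mem_nhds_prod_iff'.1 (inter_mem htarget (inter_mem hw hsymm))
  exact ⟨s, t, Θ.symm.restrOpen (s ×ˢ t) (hs.prod ht), hs, ht, ⟨hzs, hzt⟩,
    fun q hq ↦ (hst hq).2.1, inter_eq_right.2 fun q hq ↦ (hst hq).1, fun q hq ↦ (hst hq).2.2,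
    fun q hq ↦ Θ.right_inv (hst hq).1, Θ.left_inv hz⟩

section KuranishiChart

variable {𝕜 T E S : Type*} [RCLike 𝕜] [NormedAddCommGroup T] [NormedSpace 𝕜 T]
  [NormedAddCommGroup E] [NormedSpace 𝕜 E] [TopologicalSpace S]
  {H : S → T → E} {DH : S → T → T →L[𝕜] E} {K P : Submodule 𝕜 T} [CompleteSpace P]

theorem exists_openPartialHomeomorph_prodMk_comp_add {s₀ : S} {k₀ : K} {p₀ : P}
    (hH : ∀ᶠ q : S × T in 𝓝 (s₀, k₀ + p₀), ContinuousAt (fun q : S × T ↦ H q.1 q.2) q)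
    (hDH : ∀ᶠ q : S × T in 𝓝 (s₀, k₀ + p₀), HasFDerivAt (H q.1) (DH q.1 q.2) q.2)
    (hDH₀ : ContinuousAt (fun q : S × T ↦ DH q.1 q.2) (s₀, k₀ + p₀))
    {J : E →L[𝕜] P} (hJ : ∀ p : P, J (DH s₀ (k₀ + p₀) p) = p) :
    ∃ Ξ : OpenPartialHomeomorph ((S × K) × P) ((S × K) × P), ((s₀, k₀), p₀) ∈ Ξ.source ∧
      ⇑Ξ = fun x ↦ (x.1, J (H x.1.1 (x.1.2 + x.2))) := by
  let f : S × K → P → P := fun x p ↦ J (H x.1 (x.2 + p))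
  let f' : S × K → P → P →L[𝕜] P := fun x p ↦ J ∘L DH x.1 (x.2 + p) ∘L P.subtypeL
  have hadd : Continuous fun x : (S × K) × P ↦ (x.1.1, (x.1.2 + x.2 : T)) := by fun_prop
  have hadd₀ := hadd.tendsto ((s₀, k₀), p₀)
  have hf : ∀ᶠ x in 𝓝 ((s₀, k₀), p₀), ContinuousAt (fun y ↦ f y x.2) x.1 :=
    (hadd₀.eventually hH).mono fun x hx ↦ J.continuous.continuousAt.comp <|
      hx.comp (f := fun y : S × K ↦ (y.1, (y.2 + x.2 : T))) (by fun_prop)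
  have hff' : ∀ᶠ x in 𝓝 ((s₀, k₀), p₀), HasFDerivAt (f x.1) (f' x.1 x.2) x.2 :=
    (hadd₀.eventually hDH).mono fun x hx ↦ J.hasFDerivAt.comp _ <|
      hx.comp (f := fun p : P ↦ (x.1.2 + p : T)) _ (P.subtypeL.hasFDerivAt.const_add _)
  have hf' : ContinuousAt (fun x : (S × K) × P ↦ f' x.1 x.2) ((s₀, k₀), p₀) :=
    continuousAt_const.clm_comp
      ((hDH₀.comp_of_eq hadd.continuousAt rfl).clm_comp continuousAt_const)
  have hid : f' (s₀, k₀) p₀ = ContinuousLinearEquiv.refl 𝕜 P := ContinuousLinearMap.ext hJ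
  exact exists_openPartialHomeomorph_prodMk hf hff' hf' hid

theorem exists_openPartialHomeomorph_projectionL_add (hKP : K.IsTopCompl P) {s₀ : S} {v₀ : T}
    (hH : ∀ᶠ q : S × T in 𝓝 (s₀, v₀), ContinuousAt (fun q : S × T ↦ H q.1 q.2) q)
    (hDH : ∀ᶠ q : S × T in 𝓝 (s₀, v₀), HasFDerivAt (H q.1) (DH q.1 q.2) q.2)
    (hDH₀ : ContinuousAt (fun q : S × T ↦ DH q.1 q.2) (s₀, v₀))
    {J : E →L[𝕜] P} (hJ : ∀ p : P, J (DH s₀ v₀ p) = p) :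
    ∃ Θ : OpenPartialHomeomorph (S × T) (S × T), (s₀, v₀) ∈ Θ.source ∧
      ⇑Θ = fun q ↦ (q.1, K.projectionL P hKP q.2 + J (H q.1 q.2)) := by
  obtain ⟨⟨k₀, p₀⟩, rfl⟩ := (K.prodEquivOfIsTopCompl P hKP).surjective v₀
  obtain ⟨Ξ, hΞ₀, hΞ⟩ := exists_openPartialHomeomorph_prodMk_comp_add hH hDH hDH₀ hJ
  let e : (S × K) × P ≃ₜ S × T := (Homeomorph.prodAssoc S K P).trans
    ((Homeomorph.refl S).prodCongr (K.prodEquivOfIsTopCompl P hKP).toHomeomorph)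
  refine ⟨(e.symm.transOpenPartialHomeomorph Ξ).transHomeomorph e, ?_, ?_⟩
  · change e.symm (e ((s₀, k₀), p₀)) ∈ Ξ.source
    rwa [e.symm_apply_apply]
  · funext q
    obtain ⟨⟨⟨s, k⟩, p⟩, rfl⟩ := e.surjective q
    change e (Ξ (e.symm (e ((s, k), p)))) = (s, K.projectionL P hKP (k + p) + J (H s (k + p)))
    rw [e.symm_apply_apply, hΞ, projectionL_add_of_mem hKP k.2 p.2]
    rfl

theorem exists_kuranishi_chart (s₀ : S) {V : Set T} (hV : IsOpen V) (h0V : (0 : T) ∈ V)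
    (hH : ContinuousOn (fun q : S × T ↦ H q.1 q.2) (univ ×ˢ V))
    (hDH : ∀ s, ∀ v ∈ V, HasFDerivAt (H s) (DH s v) v)
    (hDH₀ : ContinuousAt (fun q : S × T ↦ DH q.1 q.2) (s₀, 0))
    (hKP : K.IsTopCompl P) {C Q : Submodule 𝕜 E} (hCQ : C.IsTopCompl Q)
    (σ : P ≃L[𝕜] Q) (hσ : ∀ x : P, (σ x : E) = DH s₀ 0 x) (hHC : H s₀ 0 ∈ C) :
    ∃ (S' : Set S) (V' : Set T) (Φ : OpenPartialHomeomorph (S × T) (S × T)),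
      IsOpen S' ∧ s₀ ∈ S' ∧ IsOpen V' ∧ 0 ∈ V' ∧ V' ⊆ V ∧ Φ.source = S' ×ˢ V' ∧
      MapsTo Φ (S' ×ˢ V') (univ ×ˢ V) ∧ Φ (s₀, 0) = (s₀, 0) ∧ ∀ q ∈ S' ×ˢ V',
        Φ q = (q.1, K.projectionL P hKP q.2 + P.projectionL K hKP.symm (Φ q).2) ∧
        H (Φ q).1 (Φ q).2 - DH s₀ 0 (P.projectionL K hKP.symm q.2) ∈ C := by
  have hW : univ ×ˢ V ∈ 𝓝 (s₀, (0 : T)) := (isOpen_univ.prod hV).mem_nhds ⟨mem_univ s₀, h0V⟩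
  obtain ⟨J, hJσ, hJker⟩ := exists_leftInverse_ker_eq hCQ σ
  have hJ : ∀ p : P, J (DH s₀ 0 p) = p := fun p ↦ hσ p ▸ hJσ p
  obtain ⟨Θ, hΘ₀, hΘ⟩ := exists_openPartialHomeomorph_projectionL_add hKP
    ((eventually_mem_nhds_iff.2 hW).mono fun q hq ↦ hH.continuousAt hq)
    (Eventually.mono hW fun q hq ↦ hDH q.1 q.2 hq.2) hDH₀ hJ
  have hΘ_base : Θ (s₀, 0) = (s₀, 0) := by
    have hJ₀ : J (H s₀ 0) = 0 := hJker.ge hHC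
    simp only [hΘ, map_zero, hJ₀, ZeroMemClass.coe_zero, add_zero]
  obtain ⟨S', V', Φ, hS', hV', ⟨hs₀, h0V'⟩, hsub, hsource, hmaps, hΘΦ, hΦ_base⟩ :=
    exists_openPartialHomeomorph_source_eq_prod Θ hΘ₀ hW (hΘ_base.symm ▸ hW)
  rw [hΘ_base] at hs₀ h0V' hΦ_base
  refine ⟨S', V', Φ, hS', hs₀, hV', h0V', fun v hv ↦ (hsub (mk_mem_prod hs₀ hv)).2, hsource,
    hmaps, hΦ_base, fun q hq ↦ ?_⟩
  set w := Φ q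
  obtain ⟨hq₁, hq₂⟩ : w.1 = q.1 ∧ K.projectionL P hKP w.2 + J (H w.1 w.2) = q.2 :=
    Prod.mk.inj (congrFun hΘ w ▸ hΘΦ hq)
  have hKw := K.projectionL_apply_mem hKP w.2
  have hJw := (J (H w.1 w.2)).2
  refine ⟨Prod.ext hq₁ ?_, hJker.le ?_⟩
  · rw [← hq₂, projectionL_add_of_mem hKP hKw hJw, Submodule.projectionL_add_projectionL_eq_self]
  · rw [← hq₂, add_comm, projectionL_add_of_mem hKP.symm hJw hKw]
    exact (map_sub J _ _).trans (sub_eq_zero.2 (hJ _).symm)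

theorem kuranishi_implicit_function_general (s₀ : S) {V : Set T} (hV : IsOpen V)
    (h0V : (0 : T) ∈ V) (hH : ContinuousOn (fun q : S × T ↦ H q.1 q.2) (univ ×ˢ V))
    (hDH : ∀ s, ∀ v ∈ V, HasFDerivAt (H s) (DH s v) v)
    (hDH₀ : ContinuousAt (fun q : S × T ↦ DH q.1 q.2) (s₀, 0))
    (hKP : K.IsTopCompl P) {C Q : Submodule 𝕜 E} (hCQ : C.IsTopCompl Q)
    (σ : P ≃L[𝕜] Q) (hσ : ∀ x : P, (σ x : E) = DH s₀ 0 x) (hHC : H s₀ 0 ∈ C) :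
    ∃ (S' : Set S) (V' : Set T) (φ : S → T → T) (κ : S → T → E),
      IsOpen S' ∧ s₀ ∈ S' ∧ IsOpen V' ∧ (0 : T) ∈ V' ∧ V' ⊆ V ∧
      (∀ s ∈ S', ∀ v ∈ V', φ s v ∈ P) ∧
      φ s₀ 0 = 0 ∧
      (∀ s ∈ S', ∀ v ∈ V', K.projectionL P hKP v + φ s v ∈ V) ∧
      ContinuousOn (fun q : S × T ↦ (q.1, K.projectionL P hKP q.2 + φ q.1 q.2)) (S' ×ˢ V') ∧
      InjOn (fun q : S × T ↦ (q.1, K.projectionL P hKP q.2 + φ q.1 q.2)) (S' ×ˢ V') ∧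
      IsOpen ((fun q : S × T ↦ (q.1, K.projectionL P hKP q.2 + φ q.1 q.2)) '' (S' ×ˢ V')) ∧
      (∃ Ψ : S × T → S × T,
        ContinuousOn Ψ
          ((fun q : S × T ↦ (q.1, K.projectionL P hKP q.2 + φ q.1 q.2)) '' (S' ×ˢ V')) ∧
        ∀ q ∈ S' ×ˢ V', Ψ (q.1, K.projectionL P hKP q.2 + φ q.1 q.2) = q) ∧
      (∀ s ∈ S', ∀ v ∈ V', κ s v ∈ C) ∧
      ContinuousOn (fun q : S × T ↦ κ q.1 q.2) (S' ×ˢ V') ∧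
      (∀ s ∈ S', ∀ v ∈ V',
        H s (K.projectionL P hKP v + φ s v) = κ s v + DH s₀ 0 (P.projectionL K hKP.symm v)) := by
  obtain ⟨S', V', Φ, hS', hs₀, hV', h0V', hsub, hsource, hmaps, hΦ₀, hΦ⟩ :=
    exists_kuranishi_chart s₀ hV h0V hH hDH hDH₀ hKP hCQ σ hσ hHC
  let φ : S → T → T := fun s v ↦ P.projectionL K hKP.symm (Φ (s, v)).2
  have hΦφ : EqOn Φ (fun q ↦ (q.1, K.projectionL P hKP q.2 + φ q.1 q.2)) (S' ×ˢ V') :=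
    fun q hq ↦ (hΦ q hq).1
  let κ : S → T → E := fun s v ↦
    H (Φ (s, v)).1 (Φ (s, v)).2 - DH s₀ 0 (P.projectionL K hKP.symm v)
  have hcont : ContinuousOn Φ (S' ×ˢ V') := hsource ▸ Φ.continuousOn
  have himage : Φ '' (S' ×ˢ V') = Φ.target := hsource ▸ Φ.image_source_eq_target
  refine ⟨S', V', φ, κ, hS', hs₀, hV', h0V', hsub, fun s _ v _ ↦ P.projectionL_apply_mem _ _,
    by simp only [φ, hΦ₀, map_zero], fun s hs v hv ↦ ?_, hcont.congr hΦφ.symm,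
    (hsource ▸ Φ.injOn).congr hΦφ, hΦφ.image_eq ▸ himage ▸ Φ.open_target,
    ⟨Φ.symm, hΦφ.image_eq ▸ himage ▸ Φ.continuousOn_symm, fun q hq ↦ ?_⟩,
    fun s hs v hv ↦ (hΦ _ (mk_mem_prod hs hv)).2, ?_, fun s hs v hv ↦ ?_⟩
  · exact (hΦφ (mk_mem_prod hs hv) ▸ hmaps (mk_mem_prod hs hv) :).2
  · exact (congrArg Φ.symm (hΦφ hq)).symm.trans (Φ.left_inv (hsource ▸ hq))
  · exact (hH.comp hcont hmaps).sub (by fun_prop)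
  · rw [sub_add_cancel, hΦφ (mk_mem_prod hs hv)]

end KuranishiChart

theorem continuousAt_of_forall_norm_sub_lt {S T G : Type*} [TopologicalSpace S]
    [SeminormedAddCommGroup T] [SeminormedAddCommGroup G] {g : S → T → G} {s₀ : S} {V : Set T}
    (hV : V ∈ 𝓝 0)
    (hg : ∀ ε > (0 : ℝ), ∃ W ∈ 𝓝 s₀, ∃ δ > (0 : ℝ),
      ∀ s ∈ W, ∀ v ∈ V, ‖v‖ < δ → ‖g s v - g s₀ 0‖ < ε) :
    ContinuousAt (fun q : S × T ↦ g q.1 q.2) (s₀, 0) := by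
  refine Metric.tendsto_nhds.2 fun ε hε ↦ ?_
  obtain ⟨W, hW, δ, hδ, hWδ⟩ := hg ε hε
  filter_upwards [prod_mem_nhds hW (inter_mem hV (Metric.ball_mem_nhds 0 hδ))] with q hq
  rw [dist_eq_norm]
  exact hWδ q.1 hq.1 q.2 hq.2.1 (mem_ball_zero_iff.1 hq.2.2)

/-- Implicit function theorem for a continuous family of differentiable maps
with splittable differential (Proposition `diff_kuranishi`). -/
theorem kuranishi_implicit_function
    {T E : Type*} [NormedAddCommGroup T] [NormedSpace ℝ T] [CompleteSpace T]
    [NormedAddCommGroup E] [NormedSpace ℝ E] [CompleteSpace E]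
    {S : Type*} [TopologicalSpace S] [T2Space S] (s₀ : S)
    (V : Set T) (hV : IsOpen V) (h0V : (0 : T) ∈ V)
    (H : S → T → E) (DH : S → T → T →L[ℝ] E)
    (Hcont : ContinuousOn (fun q : S × T => H q.1 q.2) (univ ×ˢ V))
    (Hdiff : ∀ s : S, ∀ v ∈ V, HasFDerivAt (H s) (DH s v) v)
    (Hucont : ∀ ε > (0:ℝ), ∃ W ∈ 𝓝 s₀, ∃ δ > (0:ℝ),
      ∀ s ∈ W, ∀ v ∈ V, ‖v‖ < δ → ‖DH s v - DH s₀ 0‖ < ε)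
    -- topological direct sum decompositions T = K ⊕ P, E = C ⊕ Q
    (K P : Submodule ℝ T) (hKcl : IsClosed (K : Set T)) (hPcl : IsClosed (P : Set T))
    (hKP : IsCompl K P)
    (C Q : Submodule ℝ E) (hCcl : IsClosed (C : Set E)) (hQcl : IsClosed (Q : Set E))
    (hCQ : IsCompl C Q)
    -- the continuous projections of T onto K and P
    (πK πP : T →L[ℝ] T)
    (hπK : ∀ v, πK v ∈ K) (hπP : ∀ v, πP v ∈ P) (hπ : ∀ v, πK v + πP v = v)
    -- σ = D_V H(s₀,0)|_P : P → Q is a toplinear isomorphism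
    (σ : P ≃L[ℝ] Q) (hσ : ∀ x : P, (σ x : E) = DH s₀ 0 x)
    (hHC : H s₀ 0 ∈ C) :
    ∃ (S' : Set S) (V' : Set T) (φ : S → T → T) (κ : S → T → E),
      IsOpen S' ∧ s₀ ∈ S' ∧ IsOpen V' ∧ (0:T) ∈ V' ∧ V' ⊆ V ∧
      -- Φ(s,(k,p)) = (s,(k,φ(s,k,p))), encoded as Φ(s,v) = (s, πK v + φ s v) with φ s v ∈ P
      (∀ s ∈ S', ∀ v ∈ V', φ s v ∈ P) ∧
      -- Φ(s₀,0) = (s₀,0)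
      φ s₀ 0 = 0 ∧
      -- Φ maps S' × V' into S' × V
      (∀ s ∈ S', ∀ v ∈ V', πK v + φ s v ∈ V) ∧
      -- Φ is a homeomorphism onto an open subset of S' × V :
      ContinuousOn (fun q : S × T => ((q.1, πK q.2 + φ q.1 q.2) : S × T)) (S' ×ˢ V') ∧
      InjOn (fun q : S × T => ((q.1, πK q.2 + φ q.1 q.2) : S × T)) (S' ×ˢ V') ∧
      IsOpen ((fun q : S × T => ((q.1, πK q.2 + φ q.1 q.2) : S × T)) '' (S' ×ˢ V')) ∧
      (∃ Ψ : S × T → S × T,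
        ContinuousOn Ψ
          ((fun q : S × T => ((q.1, πK q.2 + φ q.1 q.2) : S × T)) '' (S' ×ˢ V')) ∧
        ∀ q ∈ S' ×ˢ V', Ψ (q.1, πK q.2 + φ q.1 q.2) = q) ∧
      -- κ is continuous with values in C
      (∀ s ∈ S', ∀ v ∈ V', κ s v ∈ C) ∧
      ContinuousOn (fun q : S × T => κ q.1 q.2) (S' ×ˢ V') ∧
      -- H ∘ Φ = (κ, σ ∘ pr₂)
      (∀ s ∈ S', ∀ v ∈ V', H s (πK v + φ s v) = κ s v + DH s₀ 0 (πP v)) := by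
  have hKP' : K.IsTopCompl P := Submodule.IsCompl.isTopCompl_of_isClosed hKP hKcl hPcl
  have : CompleteSpace P := hPcl.completeSpace_coe
  obtain rfl := eq_projectionL_of_add_eq_self hKP' hπK hπP hπ
  obtain rfl := eq_projectionL_of_add_eq_self hKP'.symm hπP hπK fun v ↦ (add_comm _ _).trans (hπ v)
  exact kuranishi_implicit_function_general s₀ hV h0V Hcont Hdiff
    (continuousAt_of_forall_norm_sub_lt (hV.mem_nhds h0V) Hucont) hKP'
    (Submodule.IsCompl.isTopCompl_of_isClosed hCQ hCcl hQcl) σ hσ hHC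
end

section
/- Let X be a Hausdorff topological space, Y a topological space, and f : X → Y a continuous open map. Then the set of injective points of f, namely {x ∈ X : f⁻¹({f(x)}) = {x}}, is closed in X. -/
/-!
Openness of `f` says that the fibre `f ⁻¹' {y}` is a lower hemicontinuous function of `y`: an open
set that meets one fibre meets all nearby ones. Hence two points of one fibre, separated by
disjoint open sets, force every nearby fibre to have two points as well, and continuity of `f`
pulls this back from `Y` to `X`.
-/

open Set Topology

section LowerHemicontinuous

variable {Y Z : Type*} [TopologicalSpace Y] [TopologicalSpace Z] [T2Space Z] {F : Y → Set Z}

theorem isOpen_setOfPred_nontrivial_of_lowerHemicontinuous (hF : LowerHemicontinuous F) :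
    IsOpen {y | (F y).Nontrivial} := by
  rw [lowerHemicontinuous_iff_isOpen_inter_nonempty] at hF
  refine isOpen_iff_mem_nhds.2 ?_
  rintro y ⟨a, ha, b, hb, hab⟩
  obtain ⟨U, V, hU, hV, haU, hbV, hUV⟩ := t2_separation hab
  have meets_U : ∀ᶠ y' in 𝓝 y, (F y' ∩ U).Nonempty := (hF U hU).mem_nhds ⟨a, ha, haU⟩
  have meets_V : ∀ᶠ y' in 𝓝 y, (F y' ∩ V).Nonempty := (hF V hV).mem_nhds ⟨b, hb, hbV⟩
  filter_upwards [meets_U, meets_V] with y' ⟨u, hu, huU⟩ ⟨v, hv, hvV⟩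
  exact ⟨u, hu, v, hv, hUV.ne_of_mem huU hvV⟩

theorem isClosed_setOfPred_subsingleton_of_lowerHemicontinuous (hF : LowerHemicontinuous F) :
    IsClosed {y | (F y).Subsingleton} := by
  simpa only [← isOpen_compl_iff, compl_ofPred, not_subsingleton_iff]
    using isOpen_setOfPred_nontrivial_of_lowerHemicontinuous hF

end LowerHemicontinuous

theorem isClosed_setOfPred_subsingleton_fiber_of_isOpenMap {X Y : Type*} [TopologicalSpace X]
    [T2Space X] [TopologicalSpace Y] {f : X → Y} (hf : IsOpenMap f) :
    IsClosed {y | (f ⁻¹' {y}).Subsingleton} :=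
  isClosed_setOfPred_subsingleton_of_lowerHemicontinuous (isOpenMap_iff_lowerHemicontinuous.1 hf)

/-- For a continuous open map from a Hausdorff space, the set of injective points is closed. -/
theorem isClosed_injective_points
    {X Y : Type*} [TopologicalSpace X] [T2Space X] [TopologicalSpace Y]
    (f : X → Y) (hcont : Continuous f) (hopen : IsOpenMap f) :
    IsClosed {x : X | f ⁻¹' {f x} = {x}} := by
  have injective_iff (x : X) : f ⁻¹' {f x} = {x} ↔ (f ⁻¹' {f x}).Subsingleton :=
    (subsingleton_iff_singleton (mem_preimage.2 (mem_singleton (f x)))).symm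
  simp only [injective_iff]
  exact (isClosed_setOfPred_subsingleton_fiber_of_isOpenMap hopen).preimage hcont
end
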